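/- Let K be a relatively congruence distributive quasivariety of Heyting algebras, let A1, A2 be Heyting algebras, let B be a member of K_rfsi, and let h : A1 × A2 → B be a Heyting algebra homomorphism. Then there exist i ∈ {1,2} and a Heyting algebra homomorphism g : A_i → B such that h = g ∘ π_i, where π_i : A1 × A2 → A_i is the canonical projection. -/

import Mathlib

namespace Impl

open FirstOrder Language

universe u v

/-- A bundled algebra (first-order structure) for the language `L`. -/
structure Alg (L : FirstOrder.Language.{u, u}) : Type (u + 1) where
  carrier : Type u
  [str : L.Structure carrier]

attribute [instance] Alg.str

variable {L : FirstOrder.Language.{u, u}}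

/-- The direct product of a family of algebras. -/
def Alg.pi {ι : Type u} (A : ι → Alg L) : Alg L where
  carrier := ∀ i, (A i).carrier
  str :=
    { funMap := fun {k} f v i => Structure.funMap f fun j => v j i
      RelMap := fun {k} r v => ∀ i, Structure.RelMap r fun j => v j i }

/-- The binary direct product of two algebras. -/
def Alg.prod (A B : Alg L) : Alg L where
  carrier := A.carrier × B.carrier
  str :=
    { funMap := fun {k} f v =>
        (Structure.funMap f fun j => (v j).1, Structure.funMap f fun j => (v j).2)
      RelMap := fun {k} r v =>
        Structure.RelMap r (fun j => (v j).1) ∧ Structure.RelMap r fun j => (v j).2 }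

/-- The ultraproduct of a family of algebras with respect to an ultrafilter. -/
def Alg.uprod {ι : Type u} (F : Ultrafilter ι) (A : ι → Alg L) : Alg L where
  carrier := Filter.Product (F : Filter ι) fun i => (A i).carrier
  str := inferInstance

/-- Closure under isomorphic copies. -/
def ClosedUnderIso (K : Set (Alg L)) : Prop :=
  ∀ A B : Alg L, A ∈ K → Nonempty (A.carrier ≃[L] B.carrier) → B ∈ K

/-- Closure under subalgebras (up to the identification of a subalgebra with an embedding). -/
def ClosedUnderSub (K : Set (Alg L)) : Prop :=
  ∀ A B : Alg L, B ∈ K → Nonempty (A.carrier ↪[L] B.carrier) → A ∈ K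

/-- Closure under direct products. -/
def ClosedUnderProd (K : Set (Alg L)) : Prop :=
  ∀ (ι : Type u) (A : ι → Alg L), (∀ i, A i ∈ K) → Alg.pi A ∈ K

/-- Closure under finite direct products. -/
def ClosedUnderFinProd (K : Set (Alg L)) : Prop :=
  ∀ (ι : Type u), Finite ι → ∀ A : ι → Alg L, (∀ i, A i ∈ K) → Alg.pi A ∈ K

/-- Closure under homomorphic images. -/
def ClosedUnderHomImg (K : Set (Alg L)) : Prop :=
  ∀ A B : Alg L, A ∈ K → ∀ h : A.carrier →[L] B.carrier, Function.Surjective h → B ∈ K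

/-- Closure under ultraproducts. -/
def ClosedUnderUprod (K : Set (Alg L)) : Prop :=
  ∀ (ι : Type u) (F : Ultrafilter ι) (A : ι → Alg L), (∀ i, A i ∈ K) → Alg.uprod F A ∈ K

/-- A universal class: a class closed under isomorphic copies, subalgebras and ultraproducts. -/
def IsUniversalClass (K : Set (Alg L)) : Prop :=
  ClosedUnderIso K ∧ ClosedUnderSub K ∧ ClosedUnderUprod K

/-- A quasivariety: a class closed under isomorphic copies, subalgebras, direct products and
ultraproducts. -/
def IsQuasivariety (K : Set (Alg L)) : Prop :=
  ClosedUnderIso K ∧ ClosedUnderSub K ∧ ClosedUnderProd K ∧ ClosedUnderUprod K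

/-- A variety: a class closed under homomorphic images, subalgebras and direct products. -/
def IsVariety (K : Set (Alg L)) : Prop :=
  ClosedUnderHomImg K ∧ ClosedUnderSub K ∧ ClosedUnderProd K

/-- The least quasivariety containing `K`. -/
def QGen (K : Set (Alg L)) : Set (Alg L) :=
  ⋂₀ { M : Set (Alg L) | IsQuasivariety M ∧ K ⊆ M }

/-- The least variety containing `K`. -/
def VGen (K : Set (Alg L)) : Set (Alg L) :=
  ⋂₀ { M : Set (Alg L) | IsVariety M ∧ K ⊆ M }

/-- An elementary class: the class of all models of some first-order theory. -/
def IsElementary (K : Set (Alg L)) : Prop :=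
  ∃ T : L.Theory, ∀ A : Alg L, A ∈ K ↔ ∀ φ ∈ T, A.carrier ⊨ φ

/-- Finite conjunctions of equations (with `⊤` as the empty conjunction). -/
inductive IsConjEq {α : Type v} : ∀ {k : ℕ}, L.BoundedFormula α k → Prop
  | top {k} : IsConjEq (⊤ : L.BoundedFormula α k)
  | equal {k} (t₁ t₂ : L.Term (α ⊕ Fin k)) : IsConjEq (BoundedFormula.equal t₁ t₂)
  | inf {k} {φ ψ : L.BoundedFormula α k} : IsConjEq φ → IsConjEq ψ → IsConjEq (φ ⊓ ψ)

/-- Positive quantifier-free formulas: built from equations, `⊤` and `⊥` using `⊓` and `⊔`. -/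
inductive IsPosQF {α : Type v} : ∀ {k : ℕ}, L.BoundedFormula α k → Prop
  | falsum {k} : IsPosQF (⊥ : L.BoundedFormula α k)
  | top {k} : IsPosQF (⊤ : L.BoundedFormula α k)
  | equal {k} (t₁ t₂ : L.Term (α ⊕ Fin k)) : IsPosQF (BoundedFormula.equal t₁ t₂)
  | inf {k} {φ ψ : L.BoundedFormula α k} : IsPosQF φ → IsPosQF ψ → IsPosQF (φ ⊓ ψ)
  | sup {k} {φ ψ : L.BoundedFormula α k} : IsPosQF φ → IsPosQF ψ → IsPosQF (φ ⊔ ψ)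

/-- Primitive positive (pp) formulas: existentially quantified finite conjunctions of
equations. -/
inductive IsPP {α : Type v} : ∀ {k : ℕ}, L.BoundedFormula α k → Prop
  | of_conjEq {k} {φ : L.BoundedFormula α k} : IsConjEq φ → IsPP φ
  | ex {k} {φ : L.BoundedFormula α (k + 1)} : IsPP φ → IsPP φ.ex

/-- Existential positive formulas: existentially quantified positive quantifier-free
formulas. -/
inductive IsExistPos {α : Type v} : ∀ {k : ℕ}, L.BoundedFormula α k → Prop
  | of_posQF {k} {φ : L.BoundedFormula α k} : IsPosQF φ → IsExistPos φ
  | ex {k} {φ : L.BoundedFormula α (k + 1)} : IsExistPos φ → IsExistPos φ.ex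

/-- Two formulas are equivalent in a class of algebras. -/
def EquivOn (K : Set (Alg L)) {α : Type v} (φ ψ : L.Formula α) : Prop :=
  ∀ A : Alg L, A ∈ K → ∀ x : α → A.carrier, φ.Realize x ↔ ψ.Realize x

/-- A formula is preserved by homomorphisms in `K`. -/
def PreservedByHomsOn (K : Set (Alg L)) {α : Type v} (φ : L.Formula α) : Prop :=
  ∀ A B : Alg L, A ∈ K → B ∈ K → ∀ (h : A.carrier →[L] B.carrier) (x : α → A.carrier),
    φ.Realize x → φ.Realize fun a => h (x a)

/-- A formula is preserved by direct products in `K`. -/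
def PreservedByProdsOn (K : Set (Alg L)) {α : Type v} (φ : L.Formula α) : Prop :=
  ∀ (ι : Type u) (A : ι → Alg L), (∀ i, A i ∈ K) → ∀ x : α → (Alg.pi A).carrier,
    (∀ i, φ.Realize fun a => x a i) → φ.Realize x

/-- An `n`-ary partial function on a class of algebras `K`: a family assigning to each member of
`K` an `n`-ary partial function on its carrier. -/
def PartialFunOn (K : Set (Alg L)) (n : ℕ) :=
  ∀ (A : Alg L), A ∈ K → ((Fin n → A.carrier) →. A.carrier)

/-- A partial function on `K` is defined by the formula `φ(x₁, …, xₙ, y)` (the last variable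
being the output) when its graph on each member of `K` is the solution set of `φ`. -/
def DefinedBy {K : Set (Alg L)} {n : ℕ} (f : PartialFunOn K n)
    (φ : L.Formula (Fin (n + 1))) : Prop :=
  ∀ (A : Alg L) (hA : A ∈ K) (x : Fin n → A.carrier) (b : A.carrier),
    b ∈ f A hA x ↔ φ.Realize (Fin.snoc x b)

/-- The formula `φ(x₁, …, xₙ, y)` is functional in `K`: for all inputs there is at most one
output satisfying it. -/
def FunctionalIn (K : Set (Alg L)) {n : ℕ} (φ : L.Formula (Fin (n + 1))) : Prop :=
  ∀ A : Alg L, A ∈ K → ∀ (x : Fin n → A.carrier) (b₁ b₂ : A.carrier),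
    φ.Realize (Fin.snoc x b₁) → φ.Realize (Fin.snoc x b₂) → b₁ = b₂

/-- A partial function on `K` is an operation of `K` when it is preserved by all homomorphisms
between members of `K`. -/
def IsOperationOn {K : Set (Alg L)} {n : ℕ} (f : PartialFunOn K n) : Prop :=
  ∀ (A B : Alg L) (hA : A ∈ K) (hB : B ∈ K) (h : A.carrier →[L] B.carrier)
    (x : Fin n → A.carrier) (b : A.carrier),
    b ∈ f A hA x → h b ∈ f B hB fun i => h (x i)

/-- A partial function on `K` is implicit when it is defined by some formula. -/
def IsImplicit {K : Set (Alg L)} {n : ℕ} (f : PartialFunOn K n) : Prop :=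
  ∃ φ : L.Formula (Fin (n + 1)), DefinedBy f φ

/-- An implicit operation of `K`: a partial function that is both implicit and an operation. -/
def IsImplicitOp {K : Set (Alg L)} {n : ℕ} (f : PartialFunOn K n) : Prop :=
  IsImplicit f ∧ IsOperationOn f

/-- An implicit operation is extendable when every tuple in every member of `K` lies in the
domain of the operation in some extension inside `K`. -/
def Extendable {K : Set (Alg L)} {n : ℕ} (f : PartialFunOn K n) : Prop :=
  ∀ (A : Alg L) (hA : A ∈ K) (x : Fin n → A.carrier),
    ∃ (B : Alg L) (hB : B ∈ K) (e : A.carrier ↪[L] B.carrier),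
      (f B hB fun i => e (x i)).Dom

/-- The dominion of a subset `s` of `M` relative to the class `K`. -/
def dominion (K : Set (Alg L)) (M : Type u) [L.Structure M] (s : Set M) : Set M :=
  { b | ∀ C : Alg L, C ∈ K → ∀ g h : M →[L] C.carrier, (∀ a ∈ s, g a = h a) → g b = h b }

/-- The strong epimorphism surjectivity property. -/
def StrongES (K : Set (Alg L)) : Prop :=
  ∀ (A B : Alg L), A ∈ K → B ∈ K → ∀ (f : A.carrier →[L] B.carrier) (b : B.carrier),
    b ∉ Set.range f →
      ∃ C : Alg L, C ∈ K ∧ ∃ g h : B.carrier →[L] C.carrier,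
        (∀ a : A.carrier, g (f a) = h (f a)) ∧ g b ≠ h b

/-- The weak epimorphism surjectivity property: every `K`-epimorphism between finitely
generated members of `K` is surjective. -/
def WeakES (K : Set (Alg L)) : Prop :=
  ∀ (A B : Alg L), A ∈ K → B ∈ K →
    Structure.FG L A.carrier → Structure.FG L B.carrier →
      ∀ f : A.carrier →[L] B.carrier,
        (∀ C : Alg L, C ∈ K → ∀ g h : B.carrier →[L] C.carrier,
          (∀ a : A.carrier, g (f a) = h (f a)) → g = h) →
        Function.Surjective f

/-- The amalgamation property. -/
def HasAmalgamation (K : Set (Alg L)) : Prop :=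
  ∀ (A B C : Alg L), A ∈ K → B ∈ K → C ∈ K →
    ∀ (f : A.carrier ↪[L] B.carrier) (g : A.carrier ↪[L] C.carrier),
      ∃ D : Alg L, D ∈ K ∧ ∃ (f' : B.carrier ↪[L] D.carrier) (g' : C.carrier ↪[L] D.carrier),
        ∀ a : A.carrier, f' (f a) = g' (g a)

/-- A finitely presented member of `K`: an algebra in `K` with a finite presentation, phrased
through the usual universal property of `T(X)/Cg_K(Y)`. -/
def FinitelyPresentedIn (K : Set (Alg L)) (B : Alg L) : Prop :=
  B ∈ K ∧ ∃ (m : ℕ) (Y : Finset (L.Term (Fin m) × L.Term (Fin m))) (b : Fin m → B.carrier),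
    Substructure.closure L (Set.range b) = ⊤ ∧
    (∀ p ∈ Y, p.1.realize b = p.2.realize b) ∧
    ∀ C : Alg L, C ∈ K → ∀ x : Fin m → C.carrier,
      (∀ p ∈ Y, p.1.realize x = p.2.realize x) →
        ∃ g : B.carrier →[L] C.carrier, ∀ i, g (b i) = x i

/-- Subdirectly irreducible relative to `K`. -/
def IsRSI (K : Set (Alg L)) (A : Alg L) : Prop :=
  A ∈ K ∧ ∀ (ι : Type u) (B : ι → Alg L), (∀ i, B i ∈ K) →
    ∀ h : A.carrier ↪[L] (Alg.pi B).carrier,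
      (∀ i, Function.Surjective fun a => h a i) →
        ∃ i, Function.Bijective fun a => h a i

/-- Finitely subdirectly irreducible relative to `K`. -/
def IsRFSI (K : Set (Alg L)) (A : Alg L) : Prop :=
  A ∈ K ∧ ∀ (ι : Type u), Finite ι → ∀ B : ι → Alg L, (∀ i, B i ∈ K) →
    ∀ h : A.carrier ↪[L] (Alg.pi B).carrier,
      (∀ i, Function.Surjective fun a => h a i) →
        ∃ i, Function.Bijective fun a => h a i

/-- A congruence on an algebra: an equivalence relation compatible with all the operations. -/
def IsCongruenceOn (A : Alg L) (θ : A.carrier → A.carrier → Prop) : Prop :=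
  Equivalence θ ∧
    ∀ (k : ℕ) (f : L.Functions k) (x y : Fin k → A.carrier),
      (∀ i, θ (x i) (y i)) → θ (Structure.funMap f x) (Structure.funMap f y)

/-- The quotient of an algebra by (the setoid of) an equivalence relation; when the relation is
a congruence this is the quotient algebra. -/
noncomputable def Alg.quot (A : Alg L) (θ : A.carrier → A.carrier → Prop) (h : Equivalence θ) :
    Alg L where
  carrier := Quotient (⟨θ, h⟩ : Setoid A.carrier)
  str :=
    { funMap := fun {k} f v => Quotient.mk _ (Structure.funMap f fun i => (v i).out)
      RelMap := fun {k} r v => Structure.RelMap r fun i => (v i).out }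

/-- A `K`-congruence of `A`: a congruence whose quotient lies in `K`. -/
def IsRelCong (K : Set (Alg L)) (A : Alg L) (θ : A.carrier → A.carrier → Prop) : Prop :=
  ∃ h : IsCongruenceOn A θ, Alg.quot A θ h.1 ∈ K

/-- The join of two relations in the lattice of `K`-congruences of `A`. -/
def relCongJoin (K : Set (Alg L)) (A : Alg L)
    (θ φ : A.carrier → A.carrier → Prop) (x y : A.carrier) : Prop :=
  ∀ ρ : A.carrier → A.carrier → Prop, IsRelCong K A ρ →
    (∀ a b, θ a b → ρ a b) → (∀ a b, φ a b → ρ a b) → ρ x y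

/-- Relative congruence distributivity: the lattice of `K`-congruences of each member of `K`
is distributive. -/
def RelCongDistributive (K : Set (Alg L)) : Prop :=
  ∀ A : Alg L, A ∈ K → ∀ θ φ ψ : A.carrier → A.carrier → Prop,
    IsRelCong K A θ → IsRelCong K A φ → IsRelCong K A ψ →
      ∀ x y : A.carrier,
        (θ x y ∧ relCongJoin K A φ ψ x y) ↔
          relCongJoin K A (fun a b => θ a b ∧ φ a b) (fun a b => θ a b ∧ ψ a b) x y

/-- The join of two relations in the lattice of congruences of `A`. -/
def congJoin (A : Alg L) (θ φ : A.carrier → A.carrier → Prop) (x y : A.carrier) : Prop :=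
  ∀ ρ : A.carrier → A.carrier → Prop, IsCongruenceOn A ρ →
    (∀ a b, θ a b → ρ a b) → (∀ a b, φ a b → ρ a b) → ρ x y

/-- Congruence permutability for all members of a class. -/
def CongPermutableClass (K : Set (Alg L)) : Prop :=
  ∀ A : Alg L, A ∈ K → ∀ θ φ : A.carrier → A.carrier → Prop,
    IsCongruenceOn A θ → IsCongruenceOn A φ →
      ∀ x y : A.carrier, (∃ z, θ x z ∧ φ z y) ↔ ∃ z, φ x z ∧ θ z y

/-- Congruence distributivity for all members of a class. -/
def CongDistributiveClass (K : Set (Alg L)) : Prop :=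
  ∀ A : Alg L, A ∈ K → ∀ θ φ ψ : A.carrier → A.carrier → Prop,
    IsCongruenceOn A θ → IsCongruenceOn A φ → IsCongruenceOn A ψ →
      ∀ x y : A.carrier,
        (θ x y ∧ congJoin A φ ψ x y) ↔
          congJoin A (fun a b => θ a b ∧ φ a b) (fun a b => θ a b ∧ ψ a b) x y

/-- The congruence extension property. -/
def HasCEP (K : Set (Alg L)) : Prop :=
  ∀ A B : Alg L, A ∈ K → B ∈ K → ∀ e : A.carrier ↪[L] B.carrier,
    ∀ θ : A.carrier → A.carrier → Prop, IsCongruenceOn A θ →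
      ∃ ρ : B.carrier → B.carrier → Prop, IsCongruenceOn B ρ ∧
        ∀ x y : A.carrier, θ x y ↔ ρ (e x) (e y)

/-- The language consisting of one new function symbol `gᵢ` of arity `ar i` for each `i`. -/
def newLang {ι : Type u} (ar : ι → ℕ) : FirstOrder.Language.{u, u} where
  Functions := fun n => { i : ι // ar i = n }
  Relations := fun _ => PEmpty

/-- The `L`-reduct of an algebra in an expanded language `L.sum N`. -/
def algReduct {N : FirstOrder.Language.{u, u}} (B : Alg (L.sum N)) : Alg L where
  carrier := B.carrier
  str := (LHom.sumInl : L →ᴸ L.sum N).reduct B.carrier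

/-- The class `K[L_F]` of expansions of members of `K` on which each operation in the family
`f` is total, interpreting the new symbol `gᵢ` as `f i`. -/
def expClass (K : Set (Alg L)) {ι : Type u} (ar : ι → ℕ)
    (f : ∀ i, PartialFunOn K (ar i)) : Set (Alg (L.sum (newLang ar))) :=
  { B | ∃ hB : algReduct B ∈ K,
      ∀ (i : ι) (x : Fin (ar i) → B.carrier),
        Structure.funMap (L := L.sum (newLang ar)) (M := B.carrier)
            (Sum.inr ⟨i, rfl⟩ : (L.sum (newLang ar)).Functions (ar i)) x
          ∈ f i (algReduct B) hB x }

/-- Closure under subalgebras (and isomorphic copies) inside a fixed language. -/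
def SClosure {L' : FirstOrder.Language.{u, u}} (S : Set (Alg L')) : Set (Alg L') :=
  { A | ∃ B ∈ S, Nonempty (A.carrier ↪[L'] B.carrier) }

/-- Membership in `ext_pp(K)`: an extendable implicit operation defined by a pp formula. -/
def InExtPP {K : Set (Alg L)} {n : ℕ} (f : PartialFunOn K n) : Prop :=
  IsOperationOn f ∧ (∃ φ : L.Formula (Fin (n + 1)), IsPP φ ∧ DefinedBy f φ) ∧ Extendable f

/-- `M` is the pp expansion of `K` induced by the family `f` of extendable pp-definable
implicit operations, with one new symbol of arity `ar i` for each `i`. -/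
def IsPPExpansionVia (K : Set (Alg L)) {ι : Type u} (ar : ι → ℕ)
    (f : ∀ i, PartialFunOn K (ar i)) (M : Set (Alg (L.sum (newLang ar)))) : Prop :=
  (∀ i, 0 < ar i) ∧ (∀ i, InExtPP (f i)) ∧ M = SClosure (expClass K ar f)

/-- Every implicit operation of `K` is interpolated in `M` by a set of terms of the expanded
language. -/
def InterpolatesByTermsInExp (K : Set (Alg L)) {ι : Type u} {ar : ι → ℕ}
    (M : Set (Alg (L.sum (newLang ar)))) : Prop :=
  ∀ n : ℕ, 0 < n → ∀ g : PartialFunOn K n, IsImplicitOp g →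
    ∃ T : Set ((L.sum (newLang ar)).Term (Fin n)),
      ∀ A : Alg (L.sum (newLang ar)), A ∈ M →
        ∀ (hA : algReduct A ∈ K) (x : Fin n → A.carrier) (b : A.carrier),
          b ∈ g (algReduct A) hA x → ∃ t ∈ T, t.realize x = b

/-- `M` is a Beth companion of `K` (via the given expansion datum). -/
def IsBethCompanionVia (K : Set (Alg L)) {ι : Type u} (ar : ι → ℕ)
    (f : ∀ i, PartialFunOn K (ar i)) (M : Set (Alg (L.sum (newLang ar)))) : Prop :=
  IsPPExpansionVia K ar f M ∧ InterpolatesByTermsInExp K M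

/-- A pp expansion is congruence preserving when the `M`-congruences of each member of `M`
coincide with the `K`-congruences of its `L`-reduct. -/
def CongPreserving {N : FirstOrder.Language.{u, u}} (K : Set (Alg L))
    (M : Set (Alg (L.sum N))) : Prop :=
  ∀ A : Alg (L.sum N), A ∈ M → ∀ θ : A.carrier → A.carrier → Prop,
    IsRelCong M A θ ↔ IsRelCong K (algReduct A) θ

/-- Reinterpretation of an `L₁`-algebra as an `L₂`-algebra along a map sending `L₂`-symbols to
`L₁`-terms (both languages are assumed to be purely functional). -/
def reinterpret {L₁ L₂ : FirstOrder.Language.{u, u}} (ρ : ∀ n, L₂.Functions n → L₁.Term (Fin n))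
    (A : Alg L₁) : Alg L₂ where
  carrier := A.carrier
  str :=
    { funMap := fun {k} s x => (ρ k s).realize x
      RelMap := fun {k} _ _ => False }

/-- Two expansions of the same base language `L` are faithfully term equivalent relative to
`L`. -/
def FaithfullyTermEquivRel (L : FirstOrder.Language.{u, u}) {N₁ N₂ : FirstOrder.Language.{u, u}}
    (M₁ : Set (Alg (L.sum N₁))) (M₂ : Set (Alg (L.sum N₂))) : Prop :=
  ∃ (τ : ∀ n, (L.sum N₁).Functions n → (L.sum N₂).Term (Fin n))
    (ρ : ∀ n, (L.sum N₂).Functions n → (L.sum N₁).Term (Fin n)),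
    (∀ (n : ℕ) (s : L.Functions n),
      τ n (Sum.inl s) = Term.func (Sum.inl s : (L.sum N₂).Functions n) Term.var) ∧
    (∀ (n : ℕ) (s : L.Functions n),
      ρ n (Sum.inl s) = Term.func (Sum.inl s : (L.sum N₁).Functions n) Term.var) ∧
    (∀ A : Alg (L.sum N₁), A ∈ M₁ → reinterpret ρ A ∈ M₂) ∧
    (∀ B : Alg (L.sum N₂), B ∈ M₂ → reinterpret τ B ∈ M₁) ∧
    (∀ A : Alg (L.sum N₁), A ∈ M₁ → reinterpret τ (reinterpret ρ A) = A) ∧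
    (∀ B : Alg (L.sum N₂), B ∈ M₂ → reinterpret ρ (reinterpret τ B) = B)

/-- The language of Heyting algebras: two constants (`⊥`, `⊤`) and three binary operations
(`⊓`, `⊔`, `→`). -/
def Lheyt : FirstOrder.Language.{0, 0} where
  Functions := fun n => match n with
    | 0 => Fin 2
    | 2 => Fin 3
    | _ => PEmpty
  Relations := fun _ => PEmpty

instance : Lheyt.IsAlgebraic := fun _ => inferInstanceAs (IsEmpty PEmpty)

/-- The bottom symbol. -/
def botSym : Lheyt.Functions 0 := (0 : Fin 2)
/-- The top symbol. -/
def topSym : Lheyt.Functions 0 := (1 : Fin 2)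
/-- The meet symbol. -/
def meetSym : Lheyt.Functions 2 := (0 : Fin 3)
/-- The join symbol. -/
def joinSym : Lheyt.Functions 2 := (1 : Fin 3)
/-- The implication symbol. -/
def impSym : Lheyt.Functions 2 := (2 : Fin 3)

/-- Interpretation of `⊥`. -/
def hBot {M : Type} [Lheyt.Structure M] : M := Structure.funMap (L := Lheyt) botSym ![]
/-- Interpretation of `⊤`. -/
def hTop {M : Type} [Lheyt.Structure M] : M := Structure.funMap (L := Lheyt) topSym ![]
/-- Interpretation of the meet. -/
def hMeet {M : Type} [Lheyt.Structure M] (a b : M) : M :=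
  Structure.funMap (L := Lheyt) meetSym ![a, b]
/-- Interpretation of the join. -/
def hJoin {M : Type} [Lheyt.Structure M] (a b : M) : M :=
  Structure.funMap (L := Lheyt) joinSym ![a, b]
/-- Interpretation of the implication. -/
def hImp {M : Type} [Lheyt.Structure M] (a b : M) : M :=
  Structure.funMap (L := Lheyt) impSym ![a, b]
/-- The lattice order of an `Lheyt`-structure. -/
def hLe {M : Type} [Lheyt.Structure M] (a b : M) : Prop := hMeet a b = a

/-- The class of Heyting algebras: bounded distributive lattices with `a ⊓ b ≤ c ↔ a ≤ b → c`. -/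
def HeytingCl : Set (Alg Lheyt) :=
  { A | (∀ a b : A.carrier, hMeet a b = hMeet b a) ∧
        (∀ a b : A.carrier, hJoin a b = hJoin b a) ∧
        (∀ a b c : A.carrier, hMeet (hMeet a b) c = hMeet a (hMeet b c)) ∧
        (∀ a b c : A.carrier, hJoin (hJoin a b) c = hJoin a (hJoin b c)) ∧
        (∀ a b : A.carrier, hMeet a (hJoin a b) = a) ∧
        (∀ a b : A.carrier, hJoin a (hMeet a b) = a) ∧
        (∀ a b c : A.carrier, hMeet a (hJoin b c) = hJoin (hMeet a b) (hMeet a c)) ∧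
        (∀ a : A.carrier, hJoin a hBot = a) ∧
        (∀ a : A.carrier, hMeet a hTop = a) ∧
        (∀ a b c : A.carrier, hLe (hMeet a b) c ↔ hLe a (hImp b c)) }

/-! The images `a = h (1, 0)` and `b = h (0, 1)` are complementary in `B`. If `a = 1`, then
`h (x, y) = h ((x, y) ∧ (1, 0))` does not depend on `y`, and symmetrically for `b`. So it is enough
that complemented elements of a relatively finitely subdirectly irreducible `B` are trivial.

Suppose instead `a, b ≠ 0`. As `K` need not be closed under homomorphic images, the factors `[0, a]`
and `[0, b]` of `B` need not lie in `K`, so they are replaced by subalgebras of `B`: by the Boolean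
prime ideal theorem for the regular elements, some homomorphism `χ` from `B` to `{0, 1}` has
`χ a = 1`, and `x ↦ (x ∧ a) ∨ (χ x ∧ b)` is an endomorphism of `B` which preserves the
`a`-component and sends `b` to `0`. Together with its analogue for `b`, it embeds `B` subdirectly
into a product of two subalgebras of `B`, although neither of the two maps is injective. -/

section Order

variable {H H' : Type*} [HeytingAlgebra H] [HeytingAlgebra H']

theorem eq_of_inf_eq_of_codisjoint {D : Type*} [DistribLattice D] [OrderTop D] {a b x y : D}
    (hab : Codisjoint a b) (ha : x ⊓ a = y ⊓ a) (hb : x ⊓ b = y ⊓ b) : x = y := by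
  rw [← inf_top_eq x, ← inf_top_eq y, ← hab.eq_top, inf_sup_left, inf_sup_left, ha, hb]

theorem himp_inf_eq_inf_himp_inf_inf {G : Type*} [GeneralizedHeytingAlgebra G] (x y a : G) :
    (x ⇨ y) ⊓ a = (x ⊓ a ⇨ y ⊓ a) ⊓ a := by
  rw [himp_inf_distrib, himp_eq_top_iff.2 (inf_le_right : x ⊓ a ≤ a), inf_top_eq, inf_comm x a,
    ← himp_himp, himp_inf_self]

section Disjoint

variable {D : Type*} [DistribLattice D] [OrderBot D] {a b : D}

theorem inf_sup_inf_inf_left_of_disjoint (hab : Disjoint a b) (x y : D) :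
    (x ⊓ a ⊔ y ⊓ b) ⊓ a = x ⊓ a := by
  rw [inf_sup_right, inf_right_idem, inf_assoc y, hab.symm.eq_bot, inf_bot_eq, sup_bot_eq]

theorem inf_sup_inf_inf_right_of_disjoint (hab : Disjoint a b) (x y : D) :
    (x ⊓ a ⊔ y ⊓ b) ⊓ b = y ⊓ b := by
  rw [sup_comm, inf_sup_inf_inf_left_of_disjoint hab.symm]

end Disjoint

/-- The homomorphism into `H' ≅ [⊥, a] × [⊥, b]` with components `f` and `g`. -/
def glueHom {a b : H'} (hab : IsCompl a b) (f g : HeytingHom H H') : HeytingHom H H' where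
  toFun x := f x ⊓ a ⊔ g x ⊓ b
  map_sup' x y := by
    rw [map_sup, map_sup, inf_sup_right, inf_sup_right, sup_sup_sup_comm]
  map_inf' x y := by
    apply eq_of_inf_eq_of_codisjoint hab.codisjoint
    · rw [inf_inf_distrib_right (_ ⊔ _)]
      simp only [inf_sup_inf_inf_left_of_disjoint hab.disjoint, map_inf, ← inf_inf_distrib_right]
    · rw [inf_inf_distrib_right (_ ⊔ _)]
      simp only [inf_sup_inf_inf_right_of_disjoint hab.disjoint, map_inf, ← inf_inf_distrib_right]
  map_bot' := by simp
  map_himp' x y := by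
    apply eq_of_inf_eq_of_codisjoint hab.codisjoint
    · rw [himp_inf_eq_inf_himp_inf_inf (_ ⊔ _)]
      simp only [inf_sup_inf_inf_left_of_disjoint hab.disjoint, map_himp,
        ← himp_inf_eq_inf_himp_inf_inf]
    · rw [himp_inf_eq_inf_himp_inf_inf (_ ⊔ _)]
      simp only [inf_sup_inf_inf_right_of_disjoint hab.disjoint, map_himp,
        ← himp_inf_eq_inf_himp_inf_inf]

/-- The homomorphism from a bounded lattice to the truth values under which the preimage of
`False` is the prime ideal `I`. -/
def homOfPrimeIdeal {D : Type*} [Lattice D] [BoundedOrder D] (I : Order.Ideal D) (hI : I.IsPrime) :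
    BoundedLatticeHom D Prop where
  toFun x := x ∉ I
  map_sup' x y := by simp [Order.Ideal.sup_mem_iff, imp_iff_not_or]
  map_inf' x y := propext
    ⟨fun h => ⟨fun hx => h (I.lower inf_le_left hx), fun hy => h (I.lower inf_le_right hy)⟩,
      fun h hxy => (hI.mem_or_mem hxy).elim h.1 h.2⟩
  map_top' := by simpa using hI.toIsProper.top_notMem
  map_bot' := by simp

theorem exists_boundedLatticeHom_prop {D : Type*} [DistribLattice D] [BoundedOrder D] {a : D}
    (ha : a ≠ ⊥) : ∃ χ : BoundedLatticeHom D Prop, χ a := by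
  have hdisj :
      Disjoint (Order.PFilter.principal a : Set D) (Order.Ideal.principal (⊥ : D) : Set D) :=
    Set.disjoint_left.2 fun x hax hx => ha <| le_bot_iff.1 <|
      (Order.PFilter.mem_principal.1 hax).trans (Order.Ideal.mem_principal.1 hx)
  obtain ⟨I, hI, -, haI⟩ := DistribLattice.prime_ideal_of_disjoint_filter_ideal hdisj
  exact ⟨homOfPrimeIdeal I hI, Set.disjoint_left.1 haI (Order.PFilter.mem_principal.2 le_rfl)⟩

/-- Double negation as a homomorphism onto the Boolean algebra of regular elements (Glivenko). -/
def toRegularHom (H : Type*) [HeytingAlgebra H] : HeytingHom H (Heyting.Regular H) where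
  toFun := Heyting.Regular.toRegular
  map_sup' _ _ := Heyting.Regular.gi.gc.l_sup
  map_inf' x y := Heyting.Regular.coe_injective (compl_compl_inf_distrib x y)
  map_bot' := Heyting.Regular.gi.gc.l_bot
  map_himp' x y := Heyting.Regular.coe_injective (compl_compl_himp_distrib x y)

theorem exists_heytingHom_prop {a : H} (ha : a ≠ ⊥) : ∃ χ : HeytingHom H Prop, χ a := by
  have hreg : toRegularHom H a ≠ ⊥ := fun h =>
    ha (le_bot_iff.1 (le_compl_compl.trans_eq (congrArg Heyting.Regular.val h)))
  obtain ⟨χ, hχ⟩ := exists_boundedLatticeHom_prop hreg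
  exact ⟨(χ : HeytingHom (Heyting.Regular H) Prop).comp (toRegularHom H), hχ⟩

open Classical in
/-- The inclusion of the truth values as `{⊥, ⊤}`; it is not injective when `H` is trivial. -/
noncomputable def homOfProp (H : Type*) [HeytingAlgebra H] : HeytingHom Prop H where
  toFun p := if p then ⊤ else ⊥
  map_sup' p q := by by_cases p <;> by_cases q <;> simp [*]
  map_inf' p q := by by_cases p <;> by_cases q <;> simp [*]
  map_bot' := by simp
  map_himp' p q := by by_cases p <;> by_cases q <;> simp [*]

theorem exists_heytingHom_inf_eq_and_map_eq_bot {a b : H} (hab : IsCompl a b) (ha : a ≠ ⊥) :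
    ∃ φ : HeytingHom H H, (∀ x, φ x ⊓ a = x ⊓ a) ∧ φ b = ⊥ := by
  obtain ⟨χ, hχa⟩ := exists_heytingHom_prop ha
  have hχb : χ b = ⊥ := by
    have : χ a ⊓ χ b = ⊥ := by rw [← map_inf, hab.inf_eq_bot, map_bot]
    simpa [hχa] using this
  refine ⟨glueHom hab (HeytingHom.id H) ((homOfProp H).comp χ),
    fun x => inf_sup_inf_inf_left_of_disjoint hab.disjoint _ _, ?_⟩
  change b ⊓ a ⊔ homOfProp H (χ b) ⊓ b = ⊥
  rw [hχb, map_bot, bot_inf_eq, sup_bot_eq, inf_comm, hab.inf_eq_bot]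

variable {H₁ H₂ B : Type*} [HeytingAlgebra H₁] [HeytingAlgebra H₂] [HeytingAlgebra B]

theorem exists_eq_comp_fst_of_map_top_bot (f : HeytingHom (H₁ × H₂) B) (hf : f (⊤, ⊥) = ⊤) :
    ∃ g : HeytingHom H₁ B, ∀ p, f p = g p.1 := by
  have map_eq (x : H₁) (y y' : H₂) : f (x, y) = f (x, y') :=
    have map_eq_bot (z : H₂) : f (x, z) = f (x, ⊥) :=
      calc f (x, z) = f (x, z) ⊓ f (⊤, ⊥) := by rw [hf, inf_top_eq]
        _ = f (x, ⊥) := by rw [← map_inf, Prod.mk_inf_mk, inf_top_eq, inf_bot_eq]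
    (map_eq_bot y).trans (map_eq_bot y').symm
  refine ⟨
    { toFun x := f (x, ⊤)
      map_sup' x y := by rw [← map_sup, Prod.mk_sup_mk, sup_idem]
      map_inf' x y := by rw [← map_inf, Prod.mk_inf_mk, inf_idem]
      map_bot' := by rw [map_eq ⊥ ⊤ ⊥]; exact map_bot f
      map_himp' x y := by
        rw [← map_himp]
        exact congrArg f (Prod.ext rfl himp_self.symm) }, ?_⟩
  exact fun p => map_eq p.1 p.2 ⊤

theorem exists_eq_comp_snd_of_map_bot_top (f : HeytingHom (H₁ × H₂) B) (hf : f (⊥, ⊤) = ⊤) :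
    ∃ g : HeytingHom H₂ B, ∀ p, f p = g p.2 := by
  obtain ⟨g, hg⟩ := exists_eq_comp_fst_of_map_top_bot
    (f.comp ((OrderIso.prodComm : H₂ × H₁ ≃o H₁ × H₂) : HeytingHom (H₂ × H₁) (H₁ × H₂))) hf
  exact ⟨g, fun p => hg p.swap⟩

theorem exists_eq_comp_fst_or_exists_eq_comp_snd
    (hB : ∀ a b : B, IsCompl a b → a = ⊤ ∨ b = ⊤) (f : HeytingHom (H₁ × H₂) B) :
    (∃ g : HeytingHom H₁ B, ∀ p, f p = g p.1) ∨ (∃ g : HeytingHom H₂ B, ∀ p, f p = g p.2) := by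
  have hcompl : IsCompl ((⊤, ⊥) : H₁ × H₂) (⊥, ⊤) :=
    Prod.isCompl_iff.2 ⟨isCompl_top_bot, isCompl_bot_top⟩
  exact (hB _ _ (hcompl.map f)).imp (exists_eq_comp_fst_of_map_top_bot f)
    (exists_eq_comp_snd_of_map_bot_top f)

end Order

theorem IsRFSI.exists_injective_of_jointly_injective [L.IsAlgebraic] {K : Set (Alg L)}
    (hK : ClosedUnderSub K) {A : Alg L} (hA : IsRFSI K A) {ι : Type u} [Finite ι] {C : ι → Alg L}
    (hC : ∀ i, C i ∈ K) (F : ∀ i, A.carrier →[L] (C i).carrier)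
    (hF : ∀ x y, (∀ i, F i x = F i y) → x = y) :
    ∃ i, Function.Injective (F i) := by
  let D (i : ι) : Alg L := ⟨(F i).range⟩
  let e : A.carrier ↪[L] (Alg.pi D).carrier :=
    { toFun := fun x i => ⟨F i x, x, rfl⟩
      inj' := fun x y hxy => hF x y fun i => congrArg Subtype.val (congrFun hxy i)
      map_fun' := fun f x => funext fun i => Subtype.ext ((F i).map_fun f x)
      map_rel' := fun r => isEmptyElim r }
  obtain ⟨i, hi⟩ := hA.2 ι inferInstance D
    (fun i => hK _ (C i) (hC i) ⟨(F i).range.subtype⟩) e (by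
      rintro i ⟨_, x, rfl⟩
      exact ⟨x, rfl⟩)
  exact ⟨i, fun x y hxy => hi.injective (Subtype.ext hxy)⟩

/-- The interpretation of the symbols of `Lheyt` in `M` agrees with the Heyting algebra operations
of `M`. As with `FirstOrder.Ring.CompatibleRing`, this allows working with Mathlib's algebraic
structure; here it is a mixin, since the `Lheyt`-structure of an `Alg` is already given. -/
class CompatibleHeyting (M : Type*) [HeytingAlgebra M] [Lheyt.Structure M] : Prop where
  funMap_botSym (v : Fin 0 → M) : Structure.funMap botSym v = ⊥
  funMap_topSym (v : Fin 0 → M) : Structure.funMap topSym v = ⊤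
  funMap_meetSym (v : Fin 2 → M) : Structure.funMap meetSym v = v 0 ⊓ v 1
  funMap_joinSym (v : Fin 2 → M) : Structure.funMap joinSym v = v 0 ⊔ v 1
  funMap_impSym (v : Fin 2 → M) : Structure.funMap impSym v = v 0 ⇨ v 1

open CompatibleHeyting

theorem functions_cases {P : ∀ n, Lheyt.Functions n → Prop} (bot : P 0 botSym) (top : P 0 topSym)
    (meet : P 2 meetSym) (join : P 2 joinSym) (imp : P 2 impSym) :
    ∀ n f, P n f
  | 0, (0 : Fin 2) => bot
  | 0, (1 : Fin 2) => top
  | 2, (0 : Fin 3) => meet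
  | 2, (1 : Fin 3) => join
  | 2, (2 : Fin 3) => imp

theorem exists_compatibleHeyting {A : Alg Lheyt} (hA : A ∈ HeytingCl) :
    ∃ _ : HeytingAlgebra A.carrier, CompatibleHeyting A.carrier := by
  obtain ⟨meet_comm, join_comm, meet_assoc, join_assoc, meet_join_self, join_meet_self,
    meet_join, join_bot, meet_top, meet_le_iff⟩ := hA
  let _ : Max A.carrier := ⟨hJoin⟩
  let _ : Min A.carrier := ⟨hMeet⟩
  let _ : Lattice A.carrier :=
    Lattice.mk' join_comm join_assoc meet_comm meet_assoc join_meet_self meet_join_self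
  let _ : DistribLattice A.carrier := .ofInfSupLe fun a b c => (meet_join a b c).le
  let _ : BoundedOrder A.carrier :=
    { top := hTop
      le_top := fun a => inf_eq_left.1 (meet_top a)
      bot := hBot
      bot_le := fun a => sup_eq_left.1 (join_bot a) }
  let _ : HeytingAlgebra A.carrier := .ofHImp hImp fun a b c =>
    inf_eq_left.symm.trans ((meet_le_iff a b c).symm.trans inf_eq_left)
  have eta (v : Fin 2 → A.carrier) : v = ![v 0, v 1] := (FinVec.etaExpand_eq v).symm
  exact ⟨inferInstance,
    { funMap_botSym := fun v => congrArg (Structure.funMap botSym) (Subsingleton.elim v ![])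
      funMap_topSym := fun v => congrArg (Structure.funMap topSym) (Subsingleton.elim v ![])
      funMap_meetSym := fun v => congrArg (Structure.funMap meetSym) (eta v)
      funMap_joinSym := fun v => congrArg (Structure.funMap joinSym) (eta v)
      funMap_impSym := fun v => congrArg (Structure.funMap impSym) (eta v) }⟩

section Compatible

variable {M N : Type*} [HeytingAlgebra M] [Lheyt.Structure M] [CompatibleHeyting M]
  [HeytingAlgebra N] [Lheyt.Structure N] [CompatibleHeyting N]

/-- A Heyting homomorphism as a homomorphism of `Lheyt`-structures. -/
def languageHomOfHeytingHom (f : HeytingHom M N) : M →[Lheyt] N where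
  toFun := f
  map_fun' {n} s := by
    induction n, s using functions_cases <;> intro v
    · simp only [funMap_botSym, map_bot]
    · simp only [funMap_topSym, map_top]
    · simp only [funMap_meetSym, map_inf, Function.comp_apply]
    · simp only [funMap_joinSym, map_sup, Function.comp_apply]
    · simp only [funMap_impSym, map_himp, Function.comp_apply]
  map_rel' r := isEmptyElim r

/-- A homomorphism of `Lheyt`-structures as a Heyting homomorphism. -/
def heytingHomOfLanguageHom (h : M →[Lheyt] N) : HeytingHom M N where
  toFun := h
  map_sup' x y := by
    simpa [funMap_joinSym] using h.map_fun joinSym ![x, y]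
  map_inf' x y := by
    simpa [funMap_meetSym] using h.map_fun meetSym ![x, y]
  map_bot' := by
    simpa [funMap_botSym] using h.map_fun botSym ![]
  map_himp' x y := by
    simpa [funMap_impSym] using h.map_fun impSym ![x, y]

end Compatible

section Prod

variable (A₁ A₂ : Alg Lheyt) [HeytingAlgebra A₁.carrier] [HeytingAlgebra A₂.carrier]

instance : HeytingAlgebra (Alg.prod A₁ A₂).carrier :=
  inferInstanceAs (HeytingAlgebra (A₁.carrier × A₂.carrier))

instance [CompatibleHeyting A₁.carrier] [CompatibleHeyting A₂.carrier] :
    CompatibleHeyting (Alg.prod A₁ A₂).carrier where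
  funMap_botSym _ := Prod.ext (funMap_botSym _) (funMap_botSym _)
  funMap_topSym _ := Prod.ext (funMap_topSym _) (funMap_topSym _)
  funMap_meetSym _ := Prod.ext (funMap_meetSym _) (funMap_meetSym _)
  funMap_joinSym _ := Prod.ext (funMap_joinSym _) (funMap_joinSym _)
  funMap_impSym _ := Prod.ext (funMap_impSym _) (funMap_impSym _)

end Prod

theorem IsRFSI.eq_top_or_eq_top_of_isCompl {K : Set (Alg Lheyt)} (hK : ClosedUnderSub K)
    {B : Alg Lheyt} [HeytingAlgebra B.carrier] [CompatibleHeyting B.carrier] (hB : IsRFSI K B)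
    {a b : B.carrier} (hab : IsCompl a b) : a = ⊤ ∨ b = ⊤ := by
  by_contra! htop
  have ha : a ≠ ⊥ := fun ha => htop.2 (eq_top_of_bot_isCompl (ha ▸ hab))
  have hb : b ≠ ⊥ := fun hb => htop.1 (eq_top_of_isCompl_bot (hb ▸ hab))
  obtain ⟨φ, hφ, hφb⟩ := exists_heytingHom_inf_eq_and_map_eq_bot hab ha
  obtain ⟨ψ, hψ, hψa⟩ := exists_heytingHom_inf_eq_and_map_eq_bot hab.symm hb
  let F : Bool → HeytingHom B.carrier B.carrier := fun i => cond i φ ψ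
  have jointly_injective (x y : B.carrier) (hxy : ∀ i, F i x = F i y) : x = y := by
    have hφxy : φ x = φ y := hxy true
    have hψxy : ψ x = ψ y := hxy false
    exact eq_of_inf_eq_of_codisjoint hab.codisjoint (by rw [← hφ, hφxy, hφ])
      (by rw [← hψ, hψxy, hψ])
  obtain ⟨i, hi⟩ := hB.exists_injective_of_jointly_injective hK (fun _ => hB.1)
    (fun i => languageHomOfHeytingHom (F i)) jointly_injective
  cases i with
  | true => exact hb (hi (hφb.trans (map_bot φ).symm))
  | false => exact ha (hi (hψa.trans (map_bot ψ).symm))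

theorem statement_19_general {K : Set (Alg Lheyt)} (hK : ClosedUnderSub K)
    (A₁ A₂ : Alg Lheyt) (h₁ : A₁ ∈ HeytingCl) (h₂ : A₂ ∈ HeytingCl)
    (B : Alg Lheyt) (hBH : B ∈ HeytingCl) (hB : IsRFSI K B)
    (h : (Alg.prod A₁ A₂).carrier →[Lheyt] B.carrier) :
    (∃ g : A₁.carrier →[Lheyt] B.carrier,
        ∀ p : A₁.carrier × A₂.carrier, h p = g p.1) ∨
    (∃ g : A₂.carrier →[Lheyt] B.carrier,
        ∀ p : A₁.carrier × A₂.carrier, h p = g p.2) := by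
  obtain ⟨_, _⟩ := exists_compatibleHeyting h₁
  obtain ⟨_, _⟩ := exists_compatibleHeyting h₂
  obtain ⟨_, _⟩ := exists_compatibleHeyting hBH
  let f : HeytingHom (A₁.carrier × A₂.carrier) B.carrier :=
    heytingHomOfLanguageHom (M := (Alg.prod A₁ A₂).carrier) h
  refine (exists_eq_comp_fst_or_exists_eq_comp_snd
    (fun _ _ => hB.eq_top_or_eq_top_of_isCompl hK) f).imp ?_ ?_
  · exact fun ⟨g, hg⟩ => ⟨languageHomOfHeytingHom g, hg⟩
  · exact fun ⟨g, hg⟩ => ⟨languageHomOfHeytingHom g, hg⟩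

/-- Let `K` be a relatively congruence distributive quasivariety of Heyting
algebras, `A₁, A₂` Heyting algebras, `B ∈ K_rfsi`, and `h : A₁ × A₂ → B` a homomorphism. Then
`h` factors through one of the two canonical projections. -/
theorem statement_19 {K : Set (Alg Lheyt)} (hKH : K ⊆ HeytingCl)
    (hQ : IsQuasivariety K) (hRCD : RelCongDistributive K)
    (A₁ A₂ : Alg Lheyt) (h₁ : A₁ ∈ HeytingCl) (h₂ : A₂ ∈ HeytingCl)
    (B : Alg Lheyt) (hB : IsRFSI K B)
    (h : (Alg.prod A₁ A₂).carrier →[Lheyt] B.carrier) :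
    (∃ g : A₁.carrier →[Lheyt] B.carrier,
        ∀ p : A₁.carrier × A₂.carrier, h p = g p.1) ∨
    (∃ g : A₂.carrier →[Lheyt] B.carrier,
        ∀ p : A₁.carrier × A₂.carrier, h p = g p.2) :=
  statement_19_general hQ.2.1 A₁ A₂ h₁ h₂ B (hKH hB.1) hB h

end Impl
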